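/- arXiv:1205.3878 — 2 statements merged into one kernel-verified Lean document; each statement's English description precedes it below -/
import Mathlib

section
/- Every binary completely regular code of length 15 with minimum distance 5 has exactly 256 codewords. -/
open Set

/-- Distance from a vertex to a code in the binary Hamming space. -/
noncomputable def distToCode {m : ℕ} (C : Set (Fin m → ZMod 2)) (x : Fin m → ZMod 2) : ℕ :=
  sInf {d | ∃ c ∈ C, hammingDist x c = d}

/-- `C` has minimum distance `δ`. -/
def IsMinDist {m : ℕ} (C : Set (Fin m → ZMod 2)) (δ : ℕ) : Prop :=
  (∀ x ∈ C, ∀ y ∈ C, x ≠ y → δ ≤ hammingDist x y) ∧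
  ∃ x ∈ C, ∃ y ∈ C, x ≠ y ∧ hammingDist x y = δ

/-- `C` is completely regular: the number of codewords at distance `k` from `γ`
depends only on `distToCode C γ` and `k`. -/
def IsCompletelyRegular {m : ℕ} (C : Set (Fin m → ZMod 2)) : Prop :=
  ∀ γ γ' : Fin m → ZMod 2, distToCode C γ = distToCode C γ' →
    ∀ k : ℕ, {c ∈ C | hammingDist γ c = k}.ncard = {c ∈ C | hammingDist γ' c = k}.ncard

open scoped symmDiff

abbrev VV := Finset (Fin 15)

def nAt (D : Finset VV) (s : VV) (k : ℕ) : ℕ := (D.filter (fun d => (s ∆ d).card = k)).card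

def AtD (D : Finset VV) (s : VV) (t : ℕ) : Prop :=
  (∃ d ∈ D, (s ∆ d).card = t) ∧ ∀ d ∈ D, t ≤ (s ∆ d).card

structure GoodC (D : Finset VV) : Prop where
  cr : ∀ s s' t, AtD D s t → AtD D s' t → ∀ k, nAt D s k = nAt D s' k
  md : ∀ d ∈ D, ∀ d' ∈ D, d ≠ d' → 5 ≤ (d ∆ d').card
  ex : ∃ d ∈ D, ∃ d' ∈ D, (d ∆ d').card = 5

lemma card_sd (s d : VV) : (s ∆ d).card + 2 * (s ∩ d).card = s.card + d.card := by
  have h1 : (s ∆ d) = (s \ d) ∪ (d \ s) := rfl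
  have h2 : Disjoint (s \ d) (d \ s) := disjoint_sdiff_sdiff
  rw [h1, Finset.card_union_of_disjoint h2]
  have h3 := Finset.card_sdiff_add_card_inter s d
  have h4 := Finset.card_sdiff_add_card_inter d s
  rw [Finset.inter_comm d s] at h4
  omega

lemma sub_iff (s d : VV) : s ⊆ d ↔ (s ∩ d).card = s.card := by
  constructor
  · intro h; rw [Finset.inter_eq_left.mpr h]
  · intro h
    exact Finset.inter_eq_left.mp (Finset.eq_of_subset_of_card_le Finset.inter_subset_left h.ge)

lemma sd_empty (s : VV) : s ∆ ∅ = s := symmDiff_bot s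

lemma sd_cancel (c s d : VV) : (s ∆ c) ∆ (d ∆ c) = s ∆ d := by
  rw [symmDiff_comm d c, symmDiff_assoc, ← symmDiff_assoc c c d]; simp

lemma nAt_translate (D : Finset VV) (c s : VV) (k : ℕ) :
    nAt (D.image (fun d => d ∆ c)) (s ∆ c) k = nAt D s k := by
  unfold nAt
  rw [Finset.filter_image, Finset.card_image_of_injective _ (symmDiff_left_injective c)]
  simp only [sd_cancel]

lemma AtD_translate (D : Finset VV) (c s : VV) (k : ℕ) :
    AtD (D.image (fun d => d ∆ c)) (s ∆ c) k ↔ AtD D s k := by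
  unfold AtD
  simp only [Finset.mem_image, exists_exists_and_eq_and, sd_cancel, forall_exists_index, and_imp,
    forall_apply_eq_imp_iff₂]

lemma GoodC.translate {D : Finset VV} (h : GoodC D) (c : VV) :
    GoodC (D.image (fun d => d ∆ c)) := by
  refine ⟨?_, ?_, ?_⟩
  · intro s s' t h1 h2 k
    have e : ∀ u : VV, u = (u ∆ c) ∆ c := fun u => by simp
    rw [e s] at h1 ⊢
    rw [e s'] at h2 ⊢
    rw [AtD_translate] at h1 h2
    rw [nAt_translate, nAt_translate]
    exact h.cr _ _ t h1 h2 k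
  · intro d hd d' hd' hne
    obtain ⟨a, ha, rfl⟩ := Finset.mem_image.mp hd
    obtain ⟨b, hb, rfl⟩ := Finset.mem_image.mp hd'
    simp only [sd_cancel]
    exact h.md a ha b hb (fun e => hne (by rw [e]))
  · obtain ⟨a, ha, b, hb, hab⟩ := h.ex
    exact ⟨a ∆ c, Finset.mem_image_of_mem _ ha, b ∆ c, Finset.mem_image_of_mem _ hb, by
      rw [sd_cancel]; exact hab⟩

def dg (D : Finset VV) (k : ℕ) (s : VV) : ℕ := (D.filter (fun d => d.card = k ∧ s ⊆ d)).card
def aN (D : Finset VV) (k : ℕ) : ℕ := (D.filter (fun d => d.card = k)).card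
/-- weight-5 words meeting `s` in exactly two points -/
def x2 (D : Finset VV) (s : VV) : ℕ := (D.filter (fun d => d.card = 5 ∧ (s ∩ d).card = 2)).card

lemma dcount (D : Finset VV) (k j : ℕ) (u : VV) :
    ∑ s ∈ u.powersetCard j, dg D k s =
      ∑ d ∈ D.filter (fun d => d.card = k), ((u ∩ d).card).choose j := by
  have := Finset.sum_card_bipartiteAbove_eq_sum_card_bipartiteBelow
    (s := u.powersetCard j) (t := D.filter (fun d => d.card = k)) (fun s d : VV => s ⊆ d)
  unfold Finset.bipartiteAbove Finset.bipartiteBelow at this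
  simp only [Finset.filter_filter] at this
  unfold dg
  rw [this]
  apply Finset.sum_congr rfl
  intro d _
  rw [← Finset.card_powersetCard]
  congr 1
  ext s
  simp only [Finset.mem_filter, Finset.mem_powersetCard, Finset.subset_inter_iff]
  tauto

lemma dcount_univ (D : Finset VV) (k j : ℕ) :
    ∑ s ∈ (Finset.univ : VV).powersetCard j, dg D k s = aN D k * k.choose j := by
  rw [dcount, aN, ← smul_eq_mul]
  rw [Finset.sum_congr rfl (g := fun _ => k.choose j)]
  · rw [Finset.sum_const]
  · intro d hd
    rw [Finset.univ_inter, (Finset.mem_filter.mp hd).2]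

structure Good0 (D : Finset VV) : Prop extends GoodC D where
  zero : ∅ ∈ D

namespace Good0
variable {D : Finset VV}

lemma card_cases (h : Good0 D) {d : VV} (hd : d ∈ D) : d.card = 0 ∨ 5 ≤ d.card := by
  by_cases e : d = ∅
  · left; simp [e]
  · right
    have := h.md d hd ∅ h.zero e
    rwa [sd_empty] at this

lemma filt_eq (p q : VV → Prop) [DecidablePred p] [DecidablePred q]
    (hpq : ∀ d ∈ D, p d ↔ q d) : (D.filter p).card = (D.filter q).card := by
  rw [Finset.filter_congr hpq]

lemma n2_3 (h : Good0 D) {s : VV} (hs : s.card = 2) : nAt D s 3 = dg D 5 s := by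
  apply filt_eq
  intro d hd
  have h1 := h.card_cases hd
  have h2 := card_sd s d
  have h3 : (s ∩ d).card ≤ s.card := Finset.card_le_card Finset.inter_subset_left
  rw [sub_iff]; omega

lemma n2_4 (h : Good0 D) {s : VV} (hs : s.card = 2) : nAt D s 4 = dg D 6 s := by
  apply filt_eq
  intro d hd
  have h1 := h.card_cases hd
  have h2 := card_sd s d
  have h3 : (s ∩ d).card ≤ s.card := Finset.card_le_card Finset.inter_subset_left
  rw [sub_iff]; omega

lemma n1_4 (h : Good0 D) {s : VV} (hs : s.card = 1) : nAt D s 4 = dg D 5 s := by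
  apply filt_eq
  intro d hd
  have h1 := h.card_cases hd
  have h2 := card_sd s d
  have h3 : (s ∩ d).card ≤ s.card := Finset.card_le_card Finset.inter_subset_left
  rw [sub_iff]; omega

lemma n1_5 (h : Good0 D) {s : VV} (hs : s.card = 1) : nAt D s 5 = dg D 6 s := by
  apply filt_eq
  intro d hd
  have h1 := h.card_cases hd
  have h2 := card_sd s d
  have h3 : (s ∩ d).card ≤ s.card := Finset.card_le_card Finset.inter_subset_left
  rw [sub_iff]; omega

lemma n1_6 (h : Good0 D) {s : VV} (hs : s.card = 1) :
    nAt D s 6 + dg D 5 s = dg D 7 s + aN D 5 := by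
  have e1 : aN D 5 = dg D 5 s + (D.filter (fun d => d.card = 5 ∧ ¬ s ⊆ d)).card := by
    unfold aN dg
    rw [← Finset.filter_filter, ← Finset.filter_filter,
      Finset.card_filter_add_card_filter_not]
  have e2 : nAt D s 6 = dg D 7 s + (D.filter (fun d => d.card = 5 ∧ ¬ s ⊆ d)).card := by
    unfold nAt dg
    rw [← Finset.card_union_of_disjoint, ← Finset.filter_or]
    · apply filt_eq
      intro d hd
      have h1 := h.card_cases hd
      have h2 := card_sd s d
      have h3 : (s ∩ d).card ≤ s.card := Finset.card_le_card Finset.inter_subset_left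
      rw [sub_iff]; omega
    · rw [Finset.disjoint_filter]
      intro d _ h1 h2
      omega
  omega

lemma n3_3 (h : Good0 D) {s : VV} (hs : s.card = 3) : nAt D s 3 = 1 + dg D 6 s := by
  have e0 : (D.filter (fun d => d = ∅)).card = 1 := by
    rw [Finset.filter_eq', if_pos h.zero, Finset.card_singleton]
  rw [← e0]
  unfold nAt dg
  rw [← Finset.card_union_of_disjoint, ← Finset.filter_or]
  · apply filt_eq
    intro d hd
    have h1 := h.card_cases hd
    have h2 := card_sd s d
    have h3 : (s ∩ d).card ≤ s.card := Finset.card_le_card Finset.inter_subset_left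
    have h4 : (s ∩ d).card ≤ d.card := Finset.card_le_card Finset.inter_subset_right
    rw [sub_iff, ← Finset.card_eq_zero]; omega
  · rw [Finset.disjoint_filter]
    rintro d _ rfl h2
    simp at h2

lemma n3_4 (h : Good0 D) {s : VV} (hs : s.card = 3) : nAt D s 4 = dg D 7 s + x2 D s := by
  unfold nAt dg x2
  rw [← Finset.card_union_of_disjoint, ← Finset.filter_or]
  · apply filt_eq
    intro d hd
    have h1 := h.card_cases hd
    have h2 := card_sd s d
    have h3 : (s ∩ d).card ≤ s.card := Finset.card_le_card Finset.inter_subset_left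
    have h4 : (s ∩ d).card ≤ d.card := Finset.card_le_card Finset.inter_subset_right
    rw [sub_iff]; omega
  · rw [Finset.disjoint_filter]
    rintro d _ h1 h2
    omega

lemma at1 (h : Good0 D) {s : VV} (hs : s.card = 1) : AtD D s 1 := by
  refine ⟨⟨∅, h.zero, by rw [sd_empty]; exact hs⟩, fun d hd => ?_⟩
  have h1 := h.card_cases hd
  have h2 := card_sd s d
  have h3 : (s ∩ d).card ≤ s.card := Finset.card_le_card Finset.inter_subset_left
  have h4 : (s ∩ d).card ≤ d.card := Finset.card_le_card Finset.inter_subset_right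
  omega

lemma at2 (h : Good0 D) {s : VV} (hs : s.card = 2) : AtD D s 2 := by
  refine ⟨⟨∅, h.zero, by rw [sd_empty]; exact hs⟩, fun d hd => ?_⟩
  have h1 := h.card_cases hd
  have h2 := card_sd s d
  have h3 : (s ∩ d).card ≤ s.card := Finset.card_le_card Finset.inter_subset_left
  have h4 : (s ∩ d).card ≤ d.card := Finset.card_le_card Finset.inter_subset_right
  omega

lemma at3c (h : Good0 D) {s : VV} (hs : s.card = 3) (hc : dg D 5 s ≠ 0) : AtD D s 2 := by
  obtain ⟨d, hd⟩ := Finset.card_ne_zero.mp hc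
  simp only [Finset.mem_filter, sub_iff] at hd
  refine ⟨⟨d, hd.1, ?_⟩, fun d hd => ?_⟩
  · have h2 := card_sd s d
    omega
  have h1 := h.card_cases hd
  have h2 := card_sd s d
  have h3 : (s ∩ d).card ≤ s.card := Finset.card_le_card Finset.inter_subset_left
  have h4 : (s ∩ d).card ≤ d.card := Finset.card_le_card Finset.inter_subset_right
  omega

lemma at3u (h : Good0 D) {s : VV} (hs : s.card = 3) (hc : dg D 5 s = 0) : AtD D s 3 := by
  refine ⟨⟨∅, h.zero, by rw [sd_empty]; exact hs⟩, fun d hd => ?_⟩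
  have h1 := h.card_cases hd
  have h2 := card_sd s d
  have h3 : (s ∩ d).card ≤ s.card := Finset.card_le_card Finset.inter_subset_left
  have h4 : (s ∩ d).card ≤ d.card := Finset.card_le_card Finset.inter_subset_right
  have h5 : ¬ (d.card = 5 ∧ s ⊆ d) := by
    intro h5
    rw [dg, Finset.card_eq_zero, Finset.filter_eq_empty_iff] at hc
    exact hc hd h5
  rw [sub_iff] at h5
  omega

lemma unc_iff (h : Good0 D) {s : VV} (hs : s.card = 3) :
    dg D 5 s = 0 ↔ ∀ d ∈ D, 3 ≤ (s ∆ d).card := by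
  constructor
  · intro hc; exact (h.at3u hs hc).2
  · intro hc
    rw [dg, Finset.card_eq_zero, Finset.filter_eq_empty_iff]
    rintro d hd ⟨h1, h2⟩
    rw [sub_iff] at h2
    have := hc d hd
    have h3 := card_sd s d
    omega

/-- words at distance three from a vertex have disjoint differences -/
lemma n3_le (h : GoodC D) (s : VV) (hs : ∀ d ∈ D, 3 ≤ (s ∆ d).card) :
    3 * nAt D s 3 ≤ 15 ∧ (3 * nAt D s 3 = 15 → ∀ i : Fin 15, ∃ d ∈ D, (s ∆ d).card = 3 ∧ i ∈ s ∆ d) := by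
  have hb : ((D.filter (fun d => (s ∆ d).card = 3)).biUnion (fun d => s ∆ d)).card
      = nAt D s 3 * 3 := by
    rw [Finset.card_biUnion]
    · rw [nAt, Finset.sum_const_nat]
      intro d hd
      exact (Finset.mem_filter.mp hd).2
    · intro a ha b hb hab
      rw [Finset.mem_coe, Finset.mem_filter] at ha hb
      change Disjoint _ _
      have h1 := h.md a ha.1 b hb.1 hab
      rw [← sd_cancel s a b, symmDiff_comm a, symmDiff_comm b] at h1
      have h2 := card_sd (s ∆ a) (s ∆ b)
      rw [Finset.disjoint_iff_inter_eq_empty, ← Finset.card_eq_zero]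
      change ((s ∆ a) ∩ (s ∆ b)).card = 0
      omega
  constructor
  · have := Finset.card_le_univ ((D.filter (fun d => (s ∆ d).card = 3)).biUnion (fun d => s ∆ d))
    rw [Fintype.card_fin] at this
    omega
  · intro h15 i
    have : ((D.filter (fun d => (s ∆ d).card = 3)).biUnion (fun d => s ∆ d)) = Finset.univ := by
      rw [← Finset.card_eq_iff_eq_univ, Fintype.card_fin]; omega
    have hi := Finset.mem_univ i
    rw [← this, Finset.mem_biUnion] at hi
    obtain ⟨d, hd, hi⟩ := hi
    rw [Finset.mem_filter] at hd
    exact ⟨d, hd.1, hd.2, hi⟩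

lemma lam_le (h : Good0 D) {s : VV} (hs : s.card = 2) : dg D 5 s ≤ 4 := by
  have hb : ((D.filter (fun d => d.card = 5 ∧ s ⊆ d)).biUnion (fun d => d \ s)).card
      = dg D 5 s * 3 := by
    rw [Finset.card_biUnion]
    · rw [dg, Finset.sum_const_nat]
      intro d hd
      rw [Finset.mem_filter] at hd
      rw [Finset.card_sdiff_of_subset hd.2.2]; omega
    · intro a ha b hb hab
      rw [Finset.mem_coe, Finset.mem_filter] at ha hb
      change Disjoint _ _
      have h1 := h.md a ha.1 b hb.1 hab
      have h2 := card_sd a b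
      have h3 : s ⊆ a ∩ b := Finset.subset_inter ha.2.2 hb.2.2
      have h4 : a ∩ b = s := (Finset.eq_of_subset_of_card_le h3 (by omega)).symm
      rw [Finset.disjoint_left]
      intro i hi hi'
      rw [Finset.mem_sdiff] at hi hi'
      exact hi.2 (h4 ▸ Finset.mem_inter.mpr ⟨hi.1, hi'.1⟩)
  have h1 : ((D.filter (fun d => d.card = 5 ∧ s ⊆ d)).biUnion (fun d => d \ s)) ⊆ sᶜ := by
    intro i hi
    rw [Finset.mem_biUnion] at hi
    obtain ⟨d, _, hi⟩ := hi
    rw [Finset.mem_compl]; exact (Finset.mem_sdiff.mp hi).2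
  have := Finset.card_le_card h1
  rw [Finset.card_compl, Fintype.card_fin] at this
  omega

lemma tri_le (h : Good0 D) {s : VV} (hs : s.card = 3) : dg D 5 s ≤ 1 := by
  rw [dg, Finset.card_le_one]
  intro a ha b hb
  rw [Finset.mem_filter] at ha hb
  by_contra hab
  have h1 := h.md a ha.1 b hb.1 hab
  have h2 := card_sd a b
  have h3 : s ⊆ a ∩ b := Finset.subset_inter ha.2.2 hb.2.2
  have := Finset.card_le_card h3
  omega

lemma x2_eq {s : VV} (hs : s.card = 3) :
    ∑ p ∈ s.powersetCard 2, dg D 5 p = x2 D s + 3 * dg D 5 s := by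
  rw [dcount]
  have : ∀ d ∈ D.filter (fun d => d.card = 5), ((s ∩ d).card).choose 2 =
      (if (s ∩ d).card = 2 then 1 else 0) + 3 * (if s ⊆ d then 1 else 0) := by
    intro d _
    have h3 : (s ∩ d).card ≤ s.card := Finset.card_le_card Finset.inter_subset_left
    rw [hs] at h3
    simp only [sub_iff, hs]
    interval_cases (s ∩ d).card <;> rfl
  rw [Finset.sum_congr rfl this, Finset.sum_add_distrib, ← Finset.mul_sum,
    ← Finset.card_filter, ← Finset.card_filter, Finset.filter_filter, Finset.filter_filter]
  rfl

/-- pair packing in the complement of a triple -/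
lemma pack (h : Good0 D) {s : VV} (hs : s.card = 3) :
    3 * dg D 6 s + 6 * dg D 7 s + 3 * x2 D s ≤ 66 := by
  set G := D.filter (fun d => (s ∆ d).card = 3 ∨ (s ∆ d).card = 4) with hG
  have hb : (G.biUnion (fun d => (d \ s).powersetCard 2)).card
      = ∑ d ∈ G, ((d \ s).card).choose 2 := by
    rw [Finset.card_biUnion]
    · simp only [Finset.card_powersetCard]
    · intro a ha b hb hab
      rw [hG, Finset.mem_coe, Finset.mem_filter] at ha hb
      change Disjoint _ _
      have h1 := h.md a ha.1 b hb.1 hab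
      rw [← sd_cancel s a b, symmDiff_comm a, symmDiff_comm b] at h1
      have h2 := card_sd (s ∆ a) (s ∆ b)
      rw [Finset.disjoint_left]
      intro p hp hp'
      rw [Finset.mem_powersetCard] at hp hp'
      have h3 : p ⊆ (s ∆ a) ∩ (s ∆ b) := by
        intro i hi
        have := Finset.mem_sdiff.mp (hp.1 hi)
        have := Finset.mem_sdiff.mp (hp'.1 hi)
        simp only [Finset.mem_inter, Finset.mem_symmDiff]
        tauto
      have := Finset.card_le_card h3
      omega
  have h66 : (G.biUnion (fun d => (d \ s).powersetCard 2)).card ≤ 66 := by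
    have h1 : (G.biUnion (fun d => (d \ s).powersetCard 2)) ⊆ sᶜ.powersetCard 2 := by
      intro p hp
      rw [Finset.mem_biUnion] at hp
      obtain ⟨d, _, hp⟩ := hp
      rw [Finset.mem_powersetCard] at hp ⊢
      refine ⟨fun i hi => ?_, hp.2⟩
      rw [Finset.mem_compl]; exact (Finset.mem_sdiff.mp (hp.1 hi)).2
    have := Finset.card_le_card h1
    rw [Finset.card_powersetCard, Finset.card_compl, Fintype.card_fin, hs] at this
    exact this
  have hsum : ∑ d ∈ G, ((d \ s).card).choose 2 = 3 * dg D 6 s + 6 * dg D 7 s + 3 * x2 D s := by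
    unfold dg x2
    rw [Finset.card_filter, Finset.card_filter, Finset.card_filter, Finset.mul_sum,
      Finset.mul_sum, Finset.mul_sum, ← Finset.sum_add_distrib, ← Finset.sum_add_distrib, hG,
      Finset.sum_filter]
    apply Finset.sum_congr rfl
    intro d hd
    have h1 := h.card_cases hd
    have h2 := card_sd s d
    have h3 : (s ∩ d).card ≤ s.card := Finset.card_le_card Finset.inter_subset_left
    have h4 : (s ∩ d).card ≤ d.card := Finset.card_le_card Finset.inter_subset_right
    have h5 := Finset.card_sdiff_add_card_inter d s
    rw [Finset.inter_comm] at h5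
    simp only [sub_iff, hs] at *
    generalize (s ∩ d).card = x at *
    generalize (s ∆ d).card = y at *
    generalize d.card = z at *
    generalize (d \ s).card = w at *
    by_cases hy : y = 3 ∨ y = 4
    · rw [if_pos hy]
      have hz : z ≤ 7 := by omega
      interval_cases x <;> interval_cases z <;> first | omega | skip
      all_goals
        simp
        try (have : w = 0 := by omega)
        try (have : w = 3 := by omega)
        try (have : w = 4 := by omega)
        subst this
        rfl
    · rw [if_neg hy, if_neg (by omega), if_neg (by omega), if_neg (by omega)]; rfl
  omega

lemma a5_pos (h : Good0 D) : 0 < aN D 5 := by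
  obtain ⟨a, ha, b, hb, hab⟩ := h.ex
  have h1 : AtD D ∅ 0 := ⟨⟨∅, h.zero, by simp⟩, fun _ _ => Nat.zero_le _⟩
  have h2 : AtD D a 0 := ⟨⟨a, ha, by simp⟩, fun _ _ => Nat.zero_le _⟩
  have h3 := h.cr _ _ 0 h1 h2 5
  have h4 : nAt D ∅ 5 = aN D 5 := by
    apply filt_eq
    intro d _
    rw [symmDiff_comm, sd_empty]
  rw [← h4, h3]
  exact Finset.card_pos.mpr ⟨b, Finset.mem_filter.mpr ⟨hb, hab⟩⟩

/-- sum over triples of a function constant on covered and on uncovered triples -/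
lemma tri_sum (h : Good0 D) (k p q : ℕ)
    (hp : ∀ s : VV, s.card = 3 → dg D 5 s ≠ 0 → dg D k s = p)
    (hq : ∀ s : VV, s.card = 3 → dg D 5 s = 0 → dg D k s = q) :
    aN D k * k.choose 3 + (10 * aN D 5) * q = (10 * aN D 5) * p + 455 * q := by
  have h5 := dcount_univ D 5 3
  have hk := dcount_univ D k 3
  rw [← hk]
  have e : (10 * aN D 5) = aN D 5 * Nat.choose 5 3 := by
    rw [mul_comm]; rfl
  have e2 : 455 * q = ∑ s ∈ (Finset.univ : VV).powersetCard 3, q := by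
    rw [Finset.sum_const, Finset.card_powersetCard, Finset.card_univ, Fintype.card_fin]; rfl
  rw [e, ← h5, Finset.sum_mul, Finset.sum_mul, e2, ← Finset.sum_add_distrib,
    ← Finset.sum_add_distrib]
  apply Finset.sum_congr rfl
  intro s hs
  have hs := (Finset.mem_powersetCard.mp hs).2
  have h1 := h.tri_le hs
  by_cases hc : dg D 5 s = 0
  · rw [hq s hs hc, hc]; ring
  · rw [hp s hs hc]
    have : dg D 5 s = 1 := by omega
    rw [this]; ring

lemma const_sum (k j p : ℕ) (hp : ∀ s : VV, s.card = j → dg D k s = p) :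
    Nat.choose 15 j * p = aN D k * k.choose j := by
  rw [← dcount_univ, Finset.sum_congr rfl (g := fun _ => p)]
  · rw [Finset.sum_const, Finset.card_powersetCard, Finset.card_univ, Fintype.card_fin]; rfl
  · intro s hs
    exact hp s (Finset.mem_powersetCard.mp hs).2

lemma unc_card (h : Good0 D) :
    (((Finset.univ : VV).powersetCard 3).filter (fun s => dg D 5 s = 0)).card + 10 * aN D 5
      = 455 := by
  have h5 := dcount_univ D 5 3
  have e : (10 * aN D 5) = aN D 5 * Nat.choose 5 3 := by
    rw [mul_comm]; rfl
  have e2 : 455 = ∑ s ∈ (Finset.univ : VV).powersetCard 3, 1 := by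
    rw [Finset.sum_const, Finset.card_powersetCard, Finset.card_univ, Fintype.card_fin]; rfl
  rw [e, ← h5, e2, Finset.card_filter, ← Finset.sum_add_distrib]
  apply Finset.sum_congr rfl
  intro s hs
  have h1 := h.tri_le (Finset.mem_powersetCard.mp hs).2
  split_ifs <;> omega

lemma main (h : Good0 D) : aN D 5 = 42 ∧
    ∀ s : VV, s.card = 3 → dg D 5 s = 0 → nAt D s 3 = 5 := by
  have ha := h.a5_pos
  obtain ⟨s1, hs1⟩ : ∃ s : VV, s.card = 1 := ⟨{0}, rfl⟩
  obtain ⟨s2, hs2⟩ : ∃ s : VV, s.card = 2 := ⟨{0, 1}, rfl⟩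
  have hl4 := h.lam_le hs2
  have p5 : ∀ s : VV, s.card = 2 → dg D 5 s = dg D 5 s2 := fun s hs => by
    rw [← h.n2_3 hs, ← h.n2_3 hs2]; exact h.cr _ _ 2 (h.at2 hs) (h.at2 hs2) 3
  have p6 : ∀ s : VV, s.card = 2 → dg D 6 s = dg D 6 s2 := fun s hs => by
    rw [← h.n2_4 hs, ← h.n2_4 hs2]; exact h.cr _ _ 2 (h.at2 hs) (h.at2 hs2) 4
  have q5 : ∀ s : VV, s.card = 1 → dg D 5 s = dg D 5 s1 := fun s hs => by
    rw [← h.n1_4 hs, ← h.n1_4 hs1]; exact h.cr _ _ 1 (h.at1 hs) (h.at1 hs1) 4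
  have q6 : ∀ s : VV, s.card = 1 → dg D 6 s = dg D 6 s1 := fun s hs => by
    rw [← h.n1_5 hs, ← h.n1_5 hs1]; exact h.cr _ _ 1 (h.at1 hs) (h.at1 hs1) 5
  have q7 : ∀ s : VV, s.card = 1 → dg D 7 s = dg D 7 s1 := fun s hs => by
    have e1 := h.n1_6 hs
    have e2 := h.n1_6 hs1
    have e3 := h.cr _ _ 1 (h.at1 hs) (h.at1 hs1) 6
    have e4 := q5 s hs
    omega
  have c25 := const_sum 5 2 _ p5
  have c26 := const_sum 6 2 _ p6
  have c16 := const_sum 6 1 _ q6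
  have c17 := const_sum 7 1 _ q7
  have hu := h.unc_card
  norm_num [Nat.choose] at c25 c26 c16 c17
  have hl : (dg D 5 s2 = 2 ∧ aN D 5 = 21) ∨ (dg D 5 s2 = 4 ∧ aN D 5 = 42) := by omega
  obtain ⟨t, ht⟩ : ∃ t : VV, t.card = 3 ∧ dg D 5 t = 0 := by
    have : 0 < (((Finset.univ : VV).powersetCard 3).filter (fun s => dg D 5 s = 0)).card := by
      omega
    obtain ⟨t, ht⟩ := Finset.card_pos.mp this
    rw [Finset.mem_filter, Finset.mem_powersetCard] at ht
    exact ⟨t, ht.1.2, ht.2⟩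
  have hmu := (n3_le h.toGoodC t (h.at3u ht.1 ht.2).2).1
  have hm : ∀ s : VV, s.card = 3 → dg D 5 s = 0 → nAt D s 3 = nAt D t 3 := fun s hs hc =>
    h.cr _ _ 3 (h.at3u hs hc) (h.at3u ht.1 ht.2) 3
  have ht3 := h.n3_3 ht.1
  have u6 : ∀ s : VV, s.card = 3 → dg D 5 s = 0 → dg D 6 s = dg D 6 t := fun s hs hc => by
    have e1 := hm s hs hc
    have e2 := h.n3_3 hs
    omega
  have v6 : ∀ s : VV, s.card = 3 → dg D 5 s ≠ 0 → dg D 6 s = dg D 5 s2 - 1 := fun s hs hc => by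
    have e1 := h.cr _ _ 2 (h.at3c hs hc) (h.at2 hs2) 3
    have e2 := h.n3_3 hs
    have e3 := h.n2_3 hs2
    omega
  have S6 := h.tri_sum 6 _ _ v6 u6
  norm_num [Nat.choose] at S6
  rcases hl with ⟨l1, l2⟩ | ⟨l1, l2⟩
  · exfalso
    rw [l1, l2] at S6
    have f1 : dg D 6 t = 2 := by omega
    have f2 : dg D 6 s2 = 5 := by omega
    have xx : ∀ s : VV, s.card = 3 → x2 D s + 3 * dg D 5 s = 6 := by
      intro s hs
      rw [← x2_eq hs, Finset.sum_congr rfl (g := fun _ => 2)]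
      · rw [Finset.sum_const, Finset.card_powersetCard, hs]; rfl
      · intro p hp
        rw [p5 p (Finset.mem_powersetCard.mp hp).2, l1]
    have u7 : ∀ s : VV, s.card = 3 → dg D 5 s = 0 → dg D 7 s = dg D 7 t := fun s hs hc => by
      have e1 := h.cr _ _ 3 (h.at3u hs hc) (h.at3u ht.1 ht.2) 4
      have e2 := h.n3_4 hs
      have e3 := h.n3_4 ht.1
      have e4 := xx s hs
      have e5 := xx t ht.1
      omega
    have v7 : ∀ s : VV, s.card = 3 → dg D 5 s ≠ 0 → dg D 7 s = 2 := fun s hs hc => by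
      have e1 := h.cr _ _ 2 (h.at3c hs hc) (h.at2 hs2) 4
      have e2 := h.n3_4 hs
      have e3 := h.n2_4 hs2
      have e4 := xx s hs
      have e5 := h.tri_le hs
      omega
    have S7 := h.tri_sum 7 _ _ v7 u7
    norm_num [Nat.choose] at S7
    rw [l2] at S7
    have hp := h.pack ht.1
    have e5 := xx t ht.1
    omega
  · refine ⟨l2, fun s hs hc => ?_⟩
    rw [l1, l2] at S6
    rw [hm s hs hc]
    omega

end Good0

lemma GoodC.good0 {D : Finset VV} (h : GoodC D) {c : VV} (hc : c ∈ D) :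
    Good0 (D.image (fun d => d ∆ c)) :=
  { h.translate c with zero := Finset.mem_image.mpr ⟨c, hc, by simp⟩ }

/-- every vertex at distance three from the code has five codewords at distance three -/
lemma GoodC.five {D : Finset VV} (h : GoodC D) {s : VV} (hs : AtD D s 3) : nAt D s 3 = 5 := by
  obtain ⟨c, hc, hsc⟩ := hs.1
  have h0 := h.good0 hc
  have h1 := (AtD_translate D c s 3).mpr hs
  rw [← nAt_translate D c s]
  exact h0.main.2 _ hsc ((h0.unc_iff hsc).mpr h1.2)

def wt (D : Finset VV) (s c : VV) : ℕ :=
  if (s ∆ c).card ≤ 2 then 5 else if (s ∆ c).card = 3 ∧ (∀ d ∈ D, 3 ≤ (s ∆ d).card) then 1 else 0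

lemma GoodC.cov {D : Finset VV} (h : GoodC D) (s : VV) : ∃ d ∈ D, (s ∆ d).card ≤ 3 := by
  obtain ⟨a, ha, _⟩ := h.ex
  obtain ⟨c, hc, hmin⟩ := Finset.exists_min_image D (fun d => (s ∆ d).card) ⟨a, ha⟩
  by_contra! hcon
  have h4 := hcon c hc
  -- `r` is the part of the difference from `s` to `c` to be walked, ending at distance four
  obtain ⟨q, hq, hq4⟩ := Finset.exists_subset_card_eq (s := s ∆ c) (n := 4) (by omega)
  obtain ⟨q', hq', hq3⟩ := Finset.exists_subset_card_eq (s := q) (n := 3) (by omega)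
  have hcc : ∀ u : VV, (c ∆ u) ∆ c = u := fun u => by rw [symmDiff_comm, ← symmDiff_assoc]; simp
  have hmq : ∀ d ∈ D, 4 ≤ ((c ∆ q) ∆ d).card := by
    intro d hd
    have e1 := hmin d hd
    have e2 : (s ∆ d).card ≤ (s ∆ (c ∆ q)).card + ((c ∆ q) ∆ d).card := by
      have : s ∆ d ⊆ (s ∆ (c ∆ q)) ∪ ((c ∆ q) ∆ d) := symmDiff_triangle _ _ _
      exact (Finset.card_le_card this).trans (Finset.card_union_le _ _)
    have e3 : (s ∆ (c ∆ q)).card + 4 = (s ∆ c).card := by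
      rw [← symmDiff_assoc]
      have := card_sd (s ∆ c) q
      rw [Finset.inter_eq_right.mpr hq] at this
      omega
    omega
  have hstep : (c ∆ q') ∆ (c ∆ q) = q' ∆ q := by
    rw [symmDiff_comm c, symmDiff_comm c, sd_cancel]
  have h1 : (q' ∆ q).card = 1 := by
    have := card_sd q' q
    rw [Finset.inter_eq_left.mpr hq'] at this
    omega
  obtain ⟨i, hi⟩ := Finset.card_eq_one.mp h1
  have hat : AtD D (c ∆ q') 3 := by
    refine ⟨⟨c, hc, by rw [hcc]; exact hq3⟩, fun d hd => ?_⟩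
    have e1 := hmq d hd
    have e2 : ((c ∆ q) ∆ d).card ≤ ((c ∆ q) ∆ (c ∆ q')).card + ((c ∆ q') ∆ d).card := by
      have : (c ∆ q) ∆ d ⊆ ((c ∆ q) ∆ (c ∆ q')) ∪ ((c ∆ q') ∆ d) := symmDiff_triangle _ _ _
      exact (Finset.card_le_card this).trans (Finset.card_union_le _ _)
    rw [symmDiff_comm (c ∆ q) (c ∆ q'), hstep, h1] at e2
    omega
  have h5 := h.five hat
  obtain ⟨d, hd, hd3, hid⟩ := (Good0.n3_le h _ hat.2).2 (by omega) i
  have e1 := hmq d hd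
  have e2 : (c ∆ q) ∆ d = ((c ∆ q') ∆ d) ∆ {i} := by
    rw [← hi, ← hstep, symmDiff_assoc (c ∆ q') d, symmDiff_comm d, ← symmDiff_assoc,
      ← symmDiff_assoc, symmDiff_self]
    exact congrArg (· ∆ d) (bot_symmDiff (c ∆ q)).symm
  have e3 := card_sd ((c ∆ q') ∆ d) {i}
  rw [Finset.inter_eq_right.mpr (Finset.singleton_subset_iff.mpr hid), Finset.card_singleton] at e3
  rw [e2] at e1
  omega

lemma GoodC.row {D : Finset VV} (h : GoodC D) (s : VV) : ∑ c ∈ D, wt D s c = 5 := by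
  by_cases hs : ∀ d ∈ D, 3 ≤ (s ∆ d).card
  · obtain ⟨c, hc, hc3⟩ := h.cov s
    have hat : AtD D s 3 := ⟨⟨c, hc, le_antisymm hc3 (hs c hc)⟩, hs⟩
    rw [← h.five hat, nAt, Finset.card_filter]
    apply Finset.sum_congr rfl
    intro d hd
    have := hs d hd
    unfold wt
    rw [if_neg (by omega)]
    by_cases h3 : (s ∆ d).card = 3
    · rw [if_pos h3, if_pos ⟨h3, hs⟩]
    · rw [if_neg h3, if_neg (fun hh => h3 hh.1)]
  · have hs' := hs
    push Not at hs
    obtain ⟨c, hc, hc3⟩ := hs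
    rw [Finset.sum_eq_single_of_mem c hc]
    · unfold wt; rw [if_pos (by omega)]
    · intro d hd hdc
      unfold wt
      rw [if_neg, if_neg]
      · exact fun hh => hs' hh.2
      · intro hd2
        have e1 := h.md d hd c hc hdc
        rw [← sd_cancel s d c, symmDiff_comm d, symmDiff_comm c] at e1
        have := card_sd (s ∆ d) (s ∆ c)
        omega

lemma GoodC.col {D : Finset VV} (h : GoodC D) {c : VV} (hc : c ∈ D) :
    ∑ s : VV, wt D s c = 640 := by
  have h0 := h.good0 hc
  set E := D.image (fun d => d ∆ c) with hE
  have hinv : Function.Involutive (fun s : VV => s ∆ c) := fun s => by simp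
  have hall : ∀ u : VV, (∀ d ∈ D, 3 ≤ ((u ∆ c) ∆ d).card) ↔ ∀ d ∈ E, 3 ≤ (u ∆ d).card := by
    intro u
    rw [hE, Finset.forall_mem_image]
    simp only [symmDiff_assoc, symmDiff_comm c]
  have hw : ∀ u : VV, wt D (u ∆ c) c =
      5 * (if u.card = 0 then 1 else 0) + 5 * (if u.card = 1 then 1 else 0)
        + 5 * (if u.card = 2 then 1 else 0) + (if u.card = 3 ∧ dg E 5 u = 0 then 1 else 0) := by
    intro u
    have e1 : (u ∆ c) ∆ c = u := hinv u
    unfold wt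
    rw [e1]
    by_cases h3 : u.card = 3
    · have hh := (h0.unc_iff h3).trans (hall u).symm
      by_cases hz : dg E 5 u = 0
      · rw [if_neg (by omega), if_pos ⟨h3, hh.mp hz⟩]
        simp [h3, hz]
      · rw [if_neg (by omega), if_neg (fun k => hz (hh.mpr k.2))]
        simp [h3, hz]
    · simp only [h3, false_and, if_false]
      generalize u.card = n
      split_ifs <;> omega
  have hch : ∀ k : ℕ, ∑ u : VV, (if u.card = k then 1 else 0) = Nat.choose 15 k := by
    intro k
    rw [← Finset.card_filter, Finset.univ_filter_card_eq, Finset.card_powersetCard,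
      Finset.card_univ, Fintype.card_fin]
  have hun : ∑ u : VV, (if u.card = 3 ∧ dg E 5 u = 0 then 1 else 0) = 35 := by
    rw [← Finset.card_filter, ← Finset.filter_filter, Finset.univ_filter_card_eq]
    have e1 := h0.unc_card
    have e2 := h0.main.1
    omega
  rw [← Equiv.sum_comp hinv.toPerm]
  change ∑ u : VV, wt D (u ∆ c) c = 640
  rw [Finset.sum_congr rfl (fun u _ => hw u), Finset.sum_add_distrib, Finset.sum_add_distrib,
    Finset.sum_add_distrib, ← Finset.mul_sum, ← Finset.mul_sum, ← Finset.mul_sum, hch, hch, hch,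
    hun]
  rfl

lemma GoodC.card_eq {D : Finset VV} (h : GoodC D) : D.card = 256 := by
  have h1 : ∑ s : VV, ∑ c ∈ D, wt D s c = 163840 := by
    rw [Finset.sum_congr rfl (fun s _ => h.row s), Finset.sum_const, Finset.card_univ,
      Fintype.card_finset, Fintype.card_fin]
    rfl
  rw [Finset.sum_comm, Finset.sum_congr rfl (fun c hc => h.col hc), Finset.sum_const,
    smul_eq_mul] at h1
  omega

def toV (x : Fin 15 → ZMod 2) : VV := Finset.univ.filter (fun i => x i ≠ 0)

lemma toV_dist (x y : Fin 15 → ZMod 2) : (toV x ∆ toV y).card = hammingDist x y := by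
  unfold hammingDist
  congr 1
  ext i
  simp only [toV, Finset.mem_symmDiff, Finset.mem_filter, Finset.mem_univ, true_and]
  generalize x i = a
  generalize y i = b
  revert a b
  decide

lemma toV_inj : Function.Injective toV := by
  intro x y hxy
  rw [← hammingDist_eq_zero, ← toV_dist, hxy]
  simp

lemma toV_surj : Function.Surjective toV := by
  intro s
  refine ⟨fun i => if i ∈ s then 1 else 0, ?_⟩
  ext i
  simp [toV]

/-- Every binary completely regular code of length 15 with minimum distance 5 has
exactly 256 codewords. -/
theorem stmt_5 (C : Set (Fin 15 → ZMod 2)) (hC : C.Nonempty)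
    (hreg : IsCompletelyRegular C) (hd : IsMinDist C 5) :
    C.ncard = 256 := by
  classical
  have hfin := C.toFinite
  set D : Finset VV := hfin.toFinset.image toV with hD
  have hmem : ∀ d, d ∈ D ↔ ∃ c ∈ C, toV c = d := by
    intro d; simp [hD]
  have hn : ∀ x k, nAt D (toV x) k = {c ∈ C | hammingDist x c = k}.ncard := by
    intro x k
    rw [nAt, hD, Finset.filter_image, Finset.card_image_of_injective _ toV_inj,
      ← Set.ncard_coe_finset]
    congr 1
    ext c
    simp [toV_dist]
  have hat : ∀ x t, AtD D (toV x) t → distToCode C x = t := by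
    rintro x t ⟨⟨d, hdD, hdt⟩, hmin⟩
    obtain ⟨c, hc, rfl⟩ := (hmem d).mp hdD
    rw [toV_dist] at hdt
    unfold distToCode
    apply le_antisymm
    · exact Nat.sInf_le ⟨c, hc, hdt⟩
    · refine le_csInf (Set.nonempty_of_mem (x := t) ⟨c, hc, hdt⟩) ?_
      rintro b ⟨c', hc', rfl⟩
      rw [← toV_dist]
      exact hmin _ ((hmem _).mpr ⟨c', hc', rfl⟩)
  have hg : GoodC D := by
    refine ⟨?_, ?_, ?_⟩
    · intro s s' t h1 h2 k
      obtain ⟨x, rfl⟩ := toV_surj s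
      obtain ⟨y, rfl⟩ := toV_surj s'
      rw [hn, hn]
      exact hreg x y ((hat x t h1).trans (hat y t h2).symm) k
    · intro d hdD d' hdD' hne
      obtain ⟨x, hx, rfl⟩ := (hmem d).mp hdD
      obtain ⟨y, hy, rfl⟩ := (hmem d').mp hdD'
      rw [toV_dist]
      exact hd.1 x hx y hy (fun e => hne (by rw [e]))
    · obtain ⟨x, hx, y, hy, _, hxy⟩ := hd.2
      exact ⟨toV x, (hmem _).mpr ⟨x, hx, rfl⟩, toV y, (hmem _).mpr ⟨y, hy, rfl⟩, by
        rw [toV_dist, hxy]⟩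
  rw [← hg.card_eq, hD, Finset.card_image_of_injective _ toV_inj,
    Set.ncard_eq_toFinset_card C hfin]
end

section
/- Let C be a binary completely regular code of length m containing the zero vector, with minimum distance δ, and set t = ⌊δ/2⌋. Then for every k with δ ≤ k ≤ m such that C(k) ≠ ∅, the set C(k) of weight-k codewords forms a t-design: there exists a constant λ (depending only on k) such that every vector ν ∈ F_2^m of weight t is covered by exactly λ codewords of C(k), where ν is covered by β means supp(ν) ⊆ supp(β). -/
open Set

section Helpers

variable {α : Type*} [DecidableEq α]

def coverCount (F : Finset (Finset α)) (w : ℕ) (ν : Finset α) : ℕ :=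
  (F.filter (fun β => β.card = w ∧ ν ⊆ β)).card

def traceCount (F : Finset (Finset α)) (w : ℕ) (A B : Finset α) : ℕ :=
  (F.filter (fun β => β.card = w ∧ B ∩ β = A)).card

lemma traceCount_self (F : Finset (Finset α)) (w : ℕ) (A : Finset α) :
    traceCount F w A A = coverCount F w A := by
  simp [traceCount, coverCount, Finset.inter_eq_left]

lemma traceCount_step (F : Finset (Finset α)) (w : ℕ) (A B : Finset α) (x : α)
    (hA : A ⊆ B) (hx : x ∈ B) (hxA : x ∉ A) :
    traceCount F w A (B.erase x) = traceCount F w A B + traceCount F w (insert x A) B := by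
  unfold traceCount
  rw [← Finset.card_union_of_disjoint]
  · congr 1
    ext β
    simp only [Finset.mem_filter, Finset.mem_union, Finset.ext_iff, Finset.mem_inter,
      Finset.mem_erase, Finset.mem_insert]
    by_cases hxb : x ∈ β
    · constructor
      · rintro ⟨h1, h2, h3⟩
        right
        refine ⟨h1, h2, fun a => ?_⟩
        have := h3 a
        by_cases hax : a = x
        · subst hax; simp [hx, hxb]
        · simp_all
      · rintro (⟨h1, h2, h3⟩ | ⟨h1, h2, h3⟩)
        · have := h3 x; simp_all
        · refine ⟨h1, h2, fun a => ?_⟩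
          have := h3 a
          by_cases hax : a = x
          · subst hax; simp [hxA]
          · simp_all
    · constructor
      · rintro ⟨h1, h2, h3⟩
        left
        refine ⟨h1, h2, fun a => ?_⟩
        have := h3 a
        by_cases hax : a = x
        · subst hax; simp [hxA, hxb]
        · simp_all
      · rintro (⟨h1, h2, h3⟩ | ⟨h1, h2, h3⟩)
        · refine ⟨h1, h2, fun a => ?_⟩
          have := h3 a
          by_cases hax : a = x
          · subst hax; simp [hxA]
          · simp_all
        · have := h3 x; simp_all
  · rw [Finset.disjoint_left]
    intro β h1 h2
    simp only [Finset.mem_filter] at h1 h2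
    have h : A = insert x A := h1.2.2.symm.trans h2.2.2
    exact hxA (h ▸ Finset.mem_insert_self x A)

lemma traceCount_const (F : Finset (Finset α)) (w t : ℕ)
    (H : ∀ ν ν' : Finset α, ν.card = ν'.card → ν.card ≤ t → coverCount F w ν = coverCount F w ν')
    (n : ℕ) : ∀ A B A' B' : Finset α, A ⊆ B → A' ⊆ B' → A.card = A'.card → B.card = B'.card →
      B.card ≤ t → B.card = A.card + n → traceCount F w A B = traceCount F w A' B' := by
  induction n with
  | zero =>
    intro A B A' B' hA hA' h1 h2 h3 h4
    have e1 : A = B := Finset.eq_of_subset_of_card_le hA (by omega)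
    have e2 : A' = B' := Finset.eq_of_subset_of_card_le hA' (by omega)
    subst e1 e2
    rw [traceCount_self, traceCount_self]
    exact H _ _ h1 h3
  | succ n ih =>
    intro A B A' B' hA hA' h1 h2 h3 h4
    obtain ⟨x, hx, hxA⟩ := Finset.exists_mem_notMem_of_card_lt_card (s := A) (t := B) (by omega)
    obtain ⟨y, hy, hyA⟩ := Finset.exists_mem_notMem_of_card_lt_card (s := A') (t := B') (by omega)
    have s1 := traceCount_step F w A B x hA hx hxA
    have s2 := traceCount_step F w A' B' y hA' hy hyA
    have c1 := Finset.card_erase_of_mem hx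
    have c2 := Finset.card_erase_of_mem hy
    have d1 := Finset.card_insert_of_notMem hxA
    have d2 := Finset.card_insert_of_notMem hyA
    have e1 := ih A (B.erase x) A' (B'.erase y)
      (fun a ha => Finset.mem_erase.2 ⟨fun h => hxA (h ▸ ha), hA ha⟩)
      (fun a ha => Finset.mem_erase.2 ⟨fun h => hyA (h ▸ ha), hA' ha⟩)
      h1 (by omega) (by omega) (by omega)
    have e2 := ih (insert x A) B (insert y A') B' (Finset.insert_subset hx hA)
      (Finset.insert_subset hy hA') (by omega) h2 h3 (by omega)
    omega

lemma interCount_eq (F : Finset (Finset α)) (w s : ℕ) (ν : Finset α) :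
    (F.filter (fun β => β.card = w ∧ (ν ∩ β).card = s)).card =
      ∑ A ∈ ν.powersetCard s, traceCount F w A ν := by
  rw [Finset.card_eq_sum_card_fiberwise (f := fun β => ν ∩ β) (t := ν.powersetCard s)]
  · refine Finset.sum_congr rfl fun A hA => ?_
    rw [Finset.mem_powersetCard] at hA
    unfold traceCount
    rw [Finset.filter_filter]
    congr 1
    refine Finset.filter_congr fun β _ => ?_
    constructor
    · rintro ⟨⟨h1, h2⟩, h3⟩; exact ⟨h1, h3⟩
    · rintro ⟨h1, h3⟩; exact ⟨⟨h1, by rw [h3]; exact hA.2⟩, h3⟩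
  · intro β hβ
    simp only [Finset.coe_filter, Set.mem_setOf_eq] at hβ
    simp only [Finset.mem_coe, Finset.mem_powersetCard]
    exact ⟨Finset.inter_subset_left, hβ.2.2⟩

lemma interCount_const (F : Finset (Finset α)) (w t s : ℕ)
    (H : ∀ ν ν' : Finset α, ν.card = ν'.card → ν.card ≤ t → coverCount F w ν = coverCount F w ν')
    (ν ν' : Finset α) (h : ν.card = ν'.card) (ht : ν.card ≤ t) (hs : s ≤ ν.card) :
    (F.filter (fun β => β.card = w ∧ (ν ∩ β).card = s)).card =
      (F.filter (fun β => β.card = w ∧ (ν' ∩ β).card = s)).card := by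
  rw [interCount_eq, interCount_eq]
  obtain ⟨A₀, hA₀, hc₀⟩ := Finset.exists_subset_card_eq hs
  rw [Finset.sum_const_nat (m := traceCount F w A₀ ν),
    Finset.sum_const_nat (m := traceCount F w A₀ ν), Finset.card_powersetCard,
    Finset.card_powersetCard, h]
  · intro A hA
    rw [Finset.mem_powersetCard] at hA
    exact (traceCount_const F w t H (ν.card - s) A₀ ν A ν' hA₀ hA.1 (by omega) h ht
      (by omega)).symm
  · intro A hA
    rw [Finset.mem_powersetCard] at hA
    exact traceCount_const F w t H (ν.card - s) A ν A₀ ν hA.1 hA₀ (by omega) rfl ht (by omega)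

lemma card_symmDiff_add (ν β : Finset α) :
    (symmDiff ν β).card + 2 * (ν ∩ β).card = ν.card + β.card := by
  have h1 : (symmDiff ν β).card = (ν \ β).card + (β \ ν).card := by
    rw [symmDiff_def]
    exact Finset.card_union_of_disjoint disjoint_sdiff_sdiff
  have h2 := Finset.card_sdiff_add_card_inter ν β
  have h3 := Finset.card_sdiff_add_card_inter β ν
  rw [Finset.inter_comm β ν] at h3
  omega

lemma distCount_split (F : Finset (Finset α)) (k : ℕ) (ν : Finset α) (hk : ν.card ≤ k) :
    (F.filter (fun β => (symmDiff ν β).card = k - ν.card)).card =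
      coverCount F k ν + ∑ s ∈ Finset.range ν.card,
        (F.filter (fun β => β.card + 2 * ν.card = k + 2 * s ∧ (ν ∩ β).card = s)).card := by
  rw [Finset.card_eq_sum_card_fiberwise (f := fun β => (ν ∩ β).card)
    (t := Finset.range (ν.card + 1)), Finset.sum_range_succ, add_comm]
  · congr 1
    · unfold coverCount
      rw [Finset.filter_filter]
      congr 1
      refine Finset.filter_congr fun β _ => ?_
      have := card_symmDiff_add ν β
      constructor
      · rintro ⟨h1, h2⟩
        exact ⟨by omega, Finset.inter_eq_left.1
          (Finset.eq_of_subset_of_card_le Finset.inter_subset_left (by omega))⟩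
      · rintro ⟨h1, h2⟩
        rw [Finset.inter_eq_left.2 h2] at *
        exact ⟨by omega, rfl⟩
    · refine Finset.sum_congr rfl fun s _ => ?_
      rw [Finset.filter_filter]
      congr 1
      refine Finset.filter_congr fun β _ => ?_
      have := card_symmDiff_add ν β
      constructor
      · rintro ⟨h1, h2⟩
        exact ⟨by omega, h2⟩
      · rintro ⟨h1, h2⟩
        exact ⟨by omega, h2⟩
  · intro β _
    have := Finset.card_le_card (Finset.inter_subset_left (s₁ := ν) (s₂ := β))
    simp only [Finset.coe_range, Set.mem_Iio]
    omega

lemma coverCount_const (F : Finset (Finset α)) (t : ℕ)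
    (H : ∀ ν ν' : Finset α, ν.card = ν'.card → ν.card ≤ t → ∀ d,
      (F.filter (fun β => (symmDiff ν β).card = d)).card =
      (F.filter (fun β => (symmDiff ν' β).card = d)).card) (k : ℕ) :
    ∀ ν ν' : Finset α, ν.card = ν'.card → ν.card ≤ t →
      coverCount F k ν = coverCount F k ν' := by
  induction k using Nat.strong_induction_on with
  | _ k ih =>
    intro ν ν' h ht
    by_cases hk : ν.card ≤ k
    · have s1 := distCount_split F k ν hk
      have s2 := distCount_split F k ν' (h ▸ hk)
      have hh := H ν ν' h ht (k - ν.card)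
      rw [← h] at s2
      have : ∑ s ∈ Finset.range ν.card,
          (F.filter (fun β => β.card + 2 * ν.card = k + 2 * s ∧ (ν ∩ β).card = s)).card =
          ∑ s ∈ Finset.range ν.card,
          (F.filter (fun β => β.card + 2 * ν.card = k + 2 * s ∧ (ν' ∩ β).card = s)).card := by
        refine Finset.sum_congr rfl fun s hs => ?_
        rw [Finset.mem_range] at hs
        by_cases hw : k + 2 * s < 2 * ν.card
        · have e : ∀ β : Finset α, ¬ (β.card + 2 * ν.card = k + 2 * s) := fun β => by omega
          simp [e]
        · have e : ∀ β : Finset α, (β.card + 2 * ν.card = k + 2 * s) ↔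
            β.card = k + 2 * s - 2 * ν.card := fun β => by omega
          simp only [e]
          exact interCount_const F _ t s (ih _ (by omega)) ν ν' h ht hs.le
      omega
    · have e : ∀ μ : Finset α, ¬ μ.card ≤ k → coverCount F k μ = 0 := by
        intro μ hμ
        unfold coverCount
        rw [Finset.card_eq_zero, Finset.filter_eq_empty_iff]
        rintro β _ ⟨h1, h2⟩
        exact hμ (h1 ▸ Finset.card_le_card h2)
      rw [e ν hk, e ν' (h ▸ hk)]

end Helpers

section Translate

variable {m : ℕ}

def suppF (x : Fin m → ZMod 2) : Finset (Fin m) := Finset.univ.filter (fun i => x i ≠ 0)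

lemma zmod2_eq (a b : ZMod 2) (h : a ≠ 0 ↔ b ≠ 0) : a = b := by
  revert a b; decide

lemma suppF_injective : Function.Injective (suppF (m := m)) := by
  intro x y h
  funext i
  have := Finset.ext_iff.1 h i
  simp only [suppF, Finset.mem_filter, Finset.mem_univ, true_and] at this
  exact zmod2_eq _ _ this

lemma suppF_surjective (A : Finset (Fin m)) : ∃ x : Fin m → ZMod 2, suppF x = A := by
  refine ⟨fun i => if i ∈ A then 1 else 0, ?_⟩
  ext i
  simp [suppF]

lemma card_suppF (x : Fin m → ZMod 2) : (suppF x).card = hammingNorm x := rfl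

lemma zmod2_ne (a b : ZMod 2) : a ≠ b ↔ (a ≠ 0 ∧ ¬ b ≠ 0) ∨ (b ≠ 0 ∧ ¬ a ≠ 0) := by
  revert a b; decide

lemma card_symmDiff_suppF (x y : Fin m → ZMod 2) :
    (symmDiff (suppF x) (suppF y)).card = hammingDist x y := by
  unfold hammingDist
  congr 1
  ext i
  rw [Finset.mem_symmDiff]
  simp only [suppF, Finset.mem_filter, Finset.mem_univ, true_and]
  exact (zmod2_ne _ _).symm

open Classical in
lemma ncard_translate (C : Set (Fin m → ZMod 2)) (P : Finset (Fin m) → Prop) :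
    {c ∈ C | P (suppF c)}.ncard = ((Set.image suppF C).toFinset.filter P).card := by
  rw [← Set.ncard_image_of_injective _ suppF_injective, ← Set.ncard_coe_finset]
  congr 1
  ext A
  simp only [Set.mem_image, Set.mem_setOf_eq, Finset.coe_filter, Set.mem_toFinset]
  constructor
  · rintro ⟨c, ⟨h1, h2⟩, rfl⟩; exact ⟨⟨c, h1, rfl⟩, h2⟩
  · rintro ⟨⟨c, h1, rfl⟩, h2⟩; exact ⟨c, ⟨h1, h2⟩, rfl⟩

lemma distToCode_of_le {δ : ℕ} (C : Set (Fin m → ZMod 2)) (h0 : (0 : Fin m → ZMod 2) ∈ C)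
    (hd : IsMinDist C δ) (ν : Fin m → ZMod 2) (hν : hammingNorm ν ≤ δ / 2) :
    distToCode C ν = hammingNorm ν := by
  unfold distToCode
  apply le_antisymm
  · exact Nat.sInf_le ⟨0, h0, hammingDist_zero_right ν⟩
  · refine le_csInf ⟨hammingDist ν 0, 0, h0, rfl⟩ ?_
    rintro d ⟨c, hc, rfl⟩
    by_cases h : c = 0
    · subst h; rw [hammingDist_zero_right]
    · have h1 := hd.1 c hc 0 h0 h
      have h2 := hammingDist_triangle c ν 0
      rw [hammingDist_zero_right ν, hammingDist_comm c ν] at h2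
      omega

end Translate

/-- For a binary completely regular code containing the zero vector with minimum
distance `δ`, the weight-`k` codewords form a `⌊δ/2⌋`-design for each nonempty weight
class with `δ ≤ k ≤ m`. -/
theorem stmt_8 {m δ : ℕ} (C : Set (Fin m → ZMod 2))
    (h0 : (0 : Fin m → ZMod 2) ∈ C)
    (hreg : IsCompletelyRegular C) (hd : IsMinDist C δ) :
    ∀ k : ℕ, δ ≤ k → k ≤ m → {c ∈ C | hammingNorm c = k}.Nonempty →
      ∃ lam : ℕ, ∀ ν : Fin m → ZMod 2, hammingNorm ν = δ / 2 →
        {β ∈ C | hammingNorm β = k ∧ ∀ i : Fin m, ν i ≠ 0 → β i ≠ 0}.ncard = lam := by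
  classical
  intro k _ _ _
  have H : ∀ ν ν' : Finset (Fin m), ν.card = ν'.card → ν.card ≤ δ / 2 → ∀ d,
      ((Set.image suppF C).toFinset.filter (fun β => (symmDiff ν β).card = d)).card =
      ((Set.image suppF C).toFinset.filter (fun β => (symmDiff ν' β).card = d)).card := by
    intro ν ν' h ht d
    obtain ⟨x, rfl⟩ := suppF_surjective ν
    obtain ⟨y, rfl⟩ := suppF_surjective ν'
    rw [card_suppF] at h ht
    rw [card_suppF] at h
    have hxy := hreg x y (by
      rw [distToCode_of_le C h0 hd x ht, distToCode_of_le C h0 hd y (h ▸ ht), h]) d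
    simp only [← card_symmDiff_suppF] at hxy
    have e1 := ncard_translate C (fun β => (symmDiff (suppF x) β).card = d)
    have e2 := ncard_translate C (fun β => (symmDiff (suppF y) β).card = d)
    convert e1.symm.trans (hxy.trans e2)
  have key : ∀ ν : Fin m → ZMod 2,
      {β ∈ C | hammingNorm β = k ∧ ∀ i : Fin m, ν i ≠ 0 → β i ≠ 0}.ncard =
        coverCount (Set.image suppF C).toFinset k (suppF ν) := by
    intro ν
    have e := ncard_translate C (fun β => β.card = k ∧ suppF ν ⊆ β)
    unfold coverCount
    convert e using 6 with β
    · exact (by rw [card_suppF])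
    · simp [suppF, Finset.subset_iff]
  by_cases hex : ∃ ν : Fin m → ZMod 2, hammingNorm ν = δ / 2
  · obtain ⟨ν₀, h₀⟩ := hex
    refine ⟨coverCount (Set.image suppF C).toFinset k (suppF ν₀), fun ν hν => ?_⟩
    rw [key]
    exact coverCount_const _ (δ / 2) H k _ _ (by rw [card_suppF, card_suppF, h₀, hν])
      (by rw [card_suppF, hν])
  · exact ⟨0, fun ν hν => (hex ⟨ν, hν⟩).elim⟩
end
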